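/- Let P = (a,c) be a K-point of the affine curve y^d = f(x) which is a torsion point of order m (i.e., m is the least positive integer with m_P^m principal), where 1 < m ≤ n and d does not divide m. Then m = n, and there exists a polynomial v ∈ K[X] with d·deg(v) ≤ n − 1 such that m_P^n is the principal ideal of A generated by the image of Y − v(X). -/

import Mathlib

open Polynomial

/-- The affine coordinate ring `A = K[X,Y]/(Y^d − f(X))` of the curve `y^d = f(x)`,
realized as `AdjoinRoot` of the polynomial `Y^d - f(X)` over `K[X]`. -/
noncomputable abbrev CurveRing (K : Type*) [Field K] (d : ℕ) (f : K[X]) : Type _ :=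
  AdjoinRoot ((X : K[X][X]) ^ d - C f)

/-- The maximal ideal `m_{(a,c)} = (X - a, Y - c)` of the coordinate ring. -/
noncomputable def ptIdeal {K : Type*} [Field K] (d : ℕ) (f : K[X]) (a c : K) :
    Ideal (CurveRing K d f) :=
  Ideal.span {AdjoinRoot.of _ (X - C a), AdjoinRoot.root _ - AdjoinRoot.of _ (C c)}

/-- `P = (a,c)` is a torsion point of order `m` on the Jacobian: `m` is the least
positive integer such that `m_P ^ m` is a principal ideal of `A`. -/
def IsTorsionOfOrder {K : Type*} [Field K] (d : ℕ) (f : K[X]) (a c : K) (m : ℕ) : Prop :=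
  IsLeast {k : ℕ | 0 < k ∧ (ptIdeal d f a c ^ k).IsPrincipal} m

lemma aux_sum {A Γ ι : Type*} [CommRing A] [LinearOrderedCommGroupWithZero Γ]
    (v : Valuation A Γ) (τ : Γ) (hτ : 1 < τ) (s : Finset ι) (hs : s.Nonempty)
    (t : ι → A) (e : ι → ℕ) (he : Set.InjOn e s) (ht : ∀ i ∈ s, v (t i) = τ ^ e i) :
    ∃ i ∈ s, v (∑ j ∈ s, t j) = τ ^ e i ∧ ∀ j ∈ s, e j ≤ e i := by
  classical
  obtain ⟨i, hi, hmax⟩ := s.exists_max_image e hs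
  refine ⟨i, hi, ?_, hmax⟩
  have h0 : τ ≠ 0 := (zero_lt_one.trans hτ).ne'
  rw [← Finset.add_sum_erase s t hi, Valuation.map_add_eq_of_lt_left, ht i hi]
  rw [ht i hi]
  refine Valuation.map_sum_lt v (pow_ne_zero _ h0) fun j hj => ?_
  rw [Finset.mem_erase] at hj
  rw [ht j hj.2]
  exact pow_lt_pow_right₀ hτ (lt_of_le_of_ne (hmax j hj.2) fun h => hj.1 (he hj.2 hi h))

lemma aux_poly {K A Γ : Type*} [Field K] [CommRing A] [LinearOrderedCommGroupWithZero Γ]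
    (φ : K[X] →+* A) (v : Valuation A Γ) (hK : ∀ k : K, k ≠ 0 → v (φ (C k)) = 1)
    (hX : 1 < v (φ X)) (p : K[X]) (hp : p ≠ 0) : v (φ p) = v (φ X) ^ p.natDegree := by
  obtain ⟨i, hi, h1, h2⟩ := aux_sum v (v (φ X)) hX p.support (support_nonempty.mpr hp)
    (fun i => φ (C (p.coeff i) * X ^ i)) id (Function.injective_id.injOn) (by
      intro i hi
      rw [mem_support_iff] at hi
      simp [hK _ hi])
  rw [← map_sum, ← p.as_sum_support_C_mul_X_pow] at h1
  rw [h1]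
  congr 1
  exact le_antisymm (le_natDegree_of_mem_supp _ hi) (h2 _ (natDegree_mem_support_of_nonzero hp))

lemma aux_tau {Γ : Type*} [LinearOrderedCommGroupWithZero Γ] (ξ η : Γ) (hξ : 1 < ξ) (n d : ℕ)
    (hd : d ≠ 0) (hgcd : Nat.gcd n d = 1) (h : η ^ d = ξ ^ n) :
    ∃ τ : Γ, 1 < τ ∧ ξ = τ ^ d ∧ η = τ ^ n := by
  have hξ0 : ξ ≠ 0 := (zero_lt_one.trans hξ).ne'
  have hη0 : η ≠ 0 := by
    rintro rfl
    rw [zero_pow hd] at h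
    exact pow_ne_zero _ hξ0 h.symm
  have hb := Nat.gcd_eq_gcd_ab n d
  rw [hgcd] at hb
  set a := Nat.gcdA n d
  set b := Nat.gcdB n d
  have h' : η ^ (d : ℤ) = ξ ^ (n : ℤ) := by simpa using h
  have e1 : ξ = (η ^ a * ξ ^ b) ^ d := by
    rw [← zpow_natCast, mul_zpow, ← zpow_mul, ← zpow_mul, mul_comm a, zpow_mul, h', ← zpow_mul,
      ← zpow_add₀ hξ0]
    have : (n : ℤ) * a + b * d = 1 := by push_cast at hb; linarith
    rw [this, zpow_one]
  refine ⟨η ^ a * ξ ^ b, ?_, e1, ?_⟩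
  · by_contra hle
    rw [not_lt] at hle
    have := pow_le_one₀ (n := d) zero_le hle
    rw [← e1] at this
    exact absurd hξ (not_lt.mpr this)
  · rw [← zpow_natCast, mul_zpow, ← zpow_mul, ← zpow_mul, mul_comm b, zpow_mul ξ, ← h', ← zpow_mul,
      ← zpow_add₀ hη0]
    have : a * (n : ℤ) + d * b = 1 := by push_cast at hb; linarith
    rw [this, zpow_one]

lemma aux_val0 {K F : Type*} [Field K] [Field F] (ψ : K[X] →+* F) (hψ : Function.Injective ψ) :
    ∃ B : ValuationSubring F,
      (∀ k : K, k ≠ 0 → B.valuation (ψ (C k)) = 1) ∧ 1 < B.valuation (ψ X) := by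
  let _ : Algebra K F := (ψ.comp C).toAlgebra
  have hψC : ∀ k, algebraMap K F k = ψ (C k) := fun k => rfl
  have hψa : ∀ p, aeval (ψ X) p = ψ p := by
    intro p
    have h := Polynomial.hom_eval₂ p C ψ X
    rw [eval₂_C_X] at h
    rw [h]
    rfl
  have htr : Transcendental K (ψ X) := by
    rw [transcendental_iff_injective]
    intro p q hpq
    exact hψ ((hψa p).symm.trans (hpq.trans (hψa q)))
  have hX0 : ψ X ≠ 0 := fun h => X_ne_zero (hψ (h.trans (map_zero ψ).symm))
  have htr' : Transcendental K (ψ X)⁻¹ := fun h => htr (by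
    have := h.inv
    rwa [inv_inv] at this)
  rw [transcendental_iff_injective] at htr'
  let R : Subring F := (aeval (R := K) (ψ X)⁻¹).toRingHom.range
  have hmem : (ψ X)⁻¹ ∈ R := ⟨X, by simp⟩
  let I : Ideal R := Ideal.span {⟨_, hmem⟩}
  have hI : I ≠ ⊤ := by
    rw [Ne, Ideal.eq_top_iff_one, Ideal.mem_span_singleton]
    rintro ⟨⟨_, q, rfl⟩, hq⟩
    have hq := congrArg Subtype.val hq
    have h2 : aeval (ψ X)⁻¹ (1 : K[X]) = aeval (ψ X)⁻¹ (X * q) := by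
      simpa using hq
    have := congrArg (eval 0) (htr' h2)
    simp at this
  obtain ⟨B, hB1, hB2⟩ := Ideal.image_subset_nonunits_valuationSubring I hI
  refine ⟨B, ?_, ?_⟩
  · have key : ∀ k : K, B.valuation (ψ (C k)) ≤ 1 := by
      intro k
      rw [B.valuation_le_one_iff]
      exact hB1 ⟨C k, by simp [hψC]⟩
    intro k hk
    refine le_antisymm (key k) ?_
    have h1 : B.valuation (ψ (C k)) * B.valuation (ψ (C k⁻¹)) = 1 := by
      rw [← map_mul, ← map_mul, ← C_mul, mul_inv_cancel₀ hk]; simp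
    rw [← h1]
    exact mul_le_of_le_one_right' (key _)
  · have : (ψ X)⁻¹ ∈ B.nonunits := hB2 ⟨⟨_, hmem⟩, Ideal.subset_span rfl, rfl⟩
    rw [ValuationSubring.mem_nonunits_iff, map_inv₀] at this
    exact (inv_lt_one₀ (zero_lt_iff.mpr (by simpa using hX0))).mp this

lemma aux_val {K : Type*} {A : Type u} [Field K] [CommRing A] [IsDomain A]
    (φ : K[X] →+* A) (hφ : Function.Injective φ) :
    ∃ (Γ : Type u) (_ : LinearOrderedCommGroupWithZero Γ) (v : Valuation A Γ),
      (∀ k : K, k ≠ 0 → v (φ (C k)) = 1) ∧ 1 < v (φ X) := by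
  obtain ⟨B, h1, h2⟩ := aux_val0 ((algebraMap A (FractionRing A)).comp φ)
    ((IsFractionRing.injective A (FractionRing A)).comp hφ)
  exact ⟨B.ValueGroup, inferInstance, B.valuation.comap (algebraMap A (FractionRing A)), h1, h2⟩

lemma aux_prod_le {A ι : Type*} [CommRing A] (S : Finset ι) (x : A) (q : ι → A) :
    ∏ i ∈ S, Ideal.span {x, q i} ≤ Ideal.span {x, ∏ i ∈ S, q i} := by
  classical
  induction S using Finset.induction_on with
  | empty =>
    simp only [Finset.prod_empty]
    rw [(Ideal.eq_top_iff_one _).mpr (Ideal.subset_span (by simp))]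
    exact le_top
  | insert i S hi ih =>
    rw [Finset.prod_insert hi, Finset.prod_insert hi]
    refine (Ideal.mul_mono_right ih).trans ?_
    rw [Ideal.span_pair_mul_span_pair, Ideal.span_le]
    intro z hz
    simp only [Set.mem_insert_iff, Set.mem_singleton_iff] at hz
    rw [SetLike.mem_coe, Ideal.mem_span_pair]
    rcases hz with rfl | rfl | rfl | rfl
    · exact ⟨x, 0, by ring⟩
    · exact ⟨∏ i ∈ S, q i, 0, by ring⟩
    · exact ⟨q i, 0, by ring⟩
    · exact ⟨0, 1, by ring⟩

section curve
variable {K : Type*} [Field K] {d n : ℕ} {f : K[X]}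

lemma aux_monic (hd : 2 ≤ d) : ((X : K[X][X]) ^ d - C f).Monic :=
  monic_X_pow_sub_C f (by omega)

lemma aux_root : (AdjoinRoot.root ((X : K[X][X]) ^ d - C f)) ^ d = AdjoinRoot.of _ f := by
  have h := AdjoinRoot.eval₂_root ((X : K[X][X]) ^ d - C f)
  simp only [eval₂_sub, eval₂_X_pow, eval₂_C] at h
  exact sub_eq_zero.mp h

lemma aux_inj (hd : 2 ≤ d) : Function.Injective (AdjoinRoot.of ((X : K[X][X]) ^ d - C f)) := by
  apply AdjoinRoot.of.injective_of_degree_ne_zero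
  rw [degree_X_pow_sub_C (by omega)]
  exact_mod_cast (by omega : d ≠ 0)

lemma aux_g {Γ : Type*} [LinearOrderedCommGroupWithZero Γ] (hd : 2 ≤ d)
    (hgcd : Nat.gcd n d = 1)
    (v : Valuation (CurveRing K d f) Γ)
    (hK : ∀ k : K, k ≠ 0 → v (AdjoinRoot.of _ (C k)) = 1)
    (τ : Γ) (hτ : 1 < τ) (hX : v (AdjoinRoot.of _ X) = τ ^ d) (hY : v (AdjoinRoot.root _) = τ ^ n)
    (p : K[X][X]) (hp : p ≠ 0) (hpd : p.natDegree < d) :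
    ∃ i, p.coeff i ≠ 0 ∧ v (AdjoinRoot.mk _ p) = τ ^ (d * (p.coeff i).natDegree + n * i) ∧
      ∀ j, p.coeff j ≠ 0 → d * (p.coeff j).natDegree + n * j ≤
        d * (p.coeff i).natDegree + n * i := by
  obtain ⟨i, hi, h1, h2⟩ := aux_sum v τ hτ p.support (support_nonempty.mpr hp)
    (fun i => AdjoinRoot.mk _ (C (p.coeff i) * X ^ i))
    (fun i => d * (p.coeff i).natDegree + n * i) (by
      intro i hi j hj hij
      simp only at hij
      have hi' : i < d := (le_natDegree_of_mem_supp _ hi).trans_lt hpd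
      have hj' : j < d := (le_natDegree_of_mem_supp _ hj).trans_lt hpd
      have hmod : n * i ≡ n * j [MOD d] := by
        have := congrArg (· % d) hij
        simpa [Nat.ModEq, Nat.add_mod] using this
      have := Nat.ModEq.cancel_left_of_coprime (by rwa [Nat.gcd_comm] at hgcd) hmod
      rwa [Nat.ModEq, Nat.mod_eq_of_lt hi', Nat.mod_eq_of_lt hj'] at this) (by
      intro i hi
      rw [mem_support_iff] at hi
      rw [map_mul, map_pow, AdjoinRoot.mk_C, AdjoinRoot.mk_X, map_mul, map_pow, hY,
        aux_poly (AdjoinRoot.of _) v hK (by rw [hX]; exact one_lt_pow₀ hτ (by omega)) _ hi, hX,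
        ← pow_mul, ← pow_mul, ← pow_add])
  rw [← map_sum, ← p.as_sum_support_C_mul_X_pow] at h1
  exact ⟨i, mem_support_iff.mp hi, h1, fun j hj => h2 j (mem_support_iff.mpr hj)⟩

lemma aux_sigma (z : CurveRing K d f) (hz : z ^ d = 1) :
    ∃ σ : CurveRing K d f →+* CurveRing K d f, (∀ p, σ (AdjoinRoot.of _ p) = AdjoinRoot.of _ p) ∧
      σ (AdjoinRoot.root _) = z * AdjoinRoot.root _ := by
  refine ⟨AdjoinRoot.lift (AdjoinRoot.of _) (z * AdjoinRoot.root _) ?_, ?_, ?_⟩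
  · simp only [eval₂_sub, eval₂_X_pow, eval₂_C]
    rw [mul_pow, hz, aux_root]; simp
  · intro p; exact AdjoinRoot.lift_of _
  · exact AdjoinRoot.lift_root _

lemma aux_ideal [IsDomain (CurveRing K d f)] (hd : 2 ≤ d) (hsqf : Squarefree f)
    (a c : K) (hP : c ^ d = f.eval a) (ζ : K) (hζ : IsPrimitiveRoot ζ d) :
    ∏ z ∈ nthRootsFinset d (1 : CurveRing K d f),
      Ideal.span {AdjoinRoot.of ((X : K[X][X]) ^ d - C f) (X - C a),
        z * AdjoinRoot.root _ - AdjoinRoot.of _ (C c)} =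
      Ideal.span {AdjoinRoot.of ((X : K[X][X]) ^ d - C f) (X - C a)} := by
  have hd0 : 0 < d := by omega
  set φ := AdjoinRoot.of ((X : K[X][X]) ^ d - C f) with hφ
  set y := AdjoinRoot.root ((X : K[X][X]) ^ d - C f) with hy
  have hyd : y ^ d = φ f := aux_root
  have hinj : Function.Injective (φ.comp C) := (aux_inj hd).comp C_injective
  have hZ : IsPrimitiveRoot (φ (C ζ)) d := hζ.map_of_injective (f := φ.comp C) hinj
  have : NeZero d := ⟨by omega⟩
  have hroots : ∀ z ∈ nthRootsFinset d (1 : CurveRing K d f), ∃ k : K, k ^ d = 1 ∧ z = φ (C k) := by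
    intro z hz
    rw [mem_nthRootsFinset hd0] at hz
    obtain ⟨i, -, hi⟩ := hZ.eq_pow_of_pow_eq_one hz
    exact ⟨ζ ^ i, by rw [← pow_mul, mul_comm, pow_mul, hζ.pow_eq_one, one_pow], by rw [← hi]; simp⟩
  apply le_antisymm
  · refine (aux_prod_le _ _ _).trans ?_
    rw [Ideal.span_le]
    intro w hw
    simp only [Set.mem_insert_iff, Set.mem_singleton_iff] at hw
    rw [SetLike.mem_coe, Ideal.mem_span_singleton]
    rcases hw with rfl | rfl
    · exact dvd_rfl
    · have h1 := hZ.pow_sub_pow_eq_prod_sub_mul (φ (C c)) y hd0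
      have h2 : ∏ z ∈ nthRootsFinset d (1 : CurveRing K d f), (z * y - φ (C c)) =
          (∏ z ∈ nthRootsFinset d (1 : CurveRing K d f), (-1)) * (φ (C c) ^ d - y ^ d) := by
        rw [h1, ← Finset.prod_mul_distrib]
        exact Finset.prod_congr rfl fun _ _ => by ring
      rw [h2, hyd, ← map_pow, ← map_sub]
      refine Dvd.dvd.mul_left (_root_.map_dvd φ ?_) _
      rw [dvd_iff_isRoot]
      simp [hP]
  · rw [Ideal.span_singleton_le_iff_mem]
    by_cases hc : c = 0
    · subst hc
      rw [zero_pow (by omega)] at hP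
      obtain ⟨h, hh⟩ := dvd_iff_isRoot.mpr hP.symm
      have hcop : IsCoprime h ((X - C a) ^ (d - 1)) := by
        apply IsCoprime.pow_right
        rw [isCoprime_comm, (irreducible_X_sub_C a).coprime_iff_not_dvd]
        rintro ⟨r, hr⟩
        have := hsqf (X - C a) ⟨r, by rw [hh, hr]; ring⟩
        exact (irreducible_X_sub_C a).not_isUnit this
      have heq : ∀ z ∈ nthRootsFinset d (1 : CurveRing K d f),
          Ideal.span {φ (X - C a), z * y - φ (C 0)} = Ideal.span {φ (X - C a), y} := by
        intro z hz
        rw [mem_nthRootsFinset hd0] at hz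
        have hzu : IsUnit z := IsUnit.of_pow_eq_one hz (by omega)
        rw [C_0, map_zero, sub_zero, Ideal.span_insert, Ideal.span_insert (φ (X - C a)) {y},
          Ideal.span_singleton_mul_left_unit hzu]
      rw [Finset.prod_congr rfl heq, Finset.prod_const, hZ.card_nthRootsFinset]
      have m1 : φ (X - C a) ^ d ∈ Ideal.span {φ (X - C a), y} ^ d :=
        Ideal.pow_mem_pow (Ideal.subset_span (by simp)) _
      have m2 : y ^ d ∈ Ideal.span {φ (X - C a), y} ^ d :=
        Ideal.pow_mem_pow (Ideal.subset_span (by simp)) _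
      obtain ⟨r, s, hrs⟩ := hcop
      have : φ (X - C a) = φ r * y ^ d + φ s * φ (X - C a) ^ d := by
        rw [hyd, ← map_pow, ← map_mul, ← map_mul, ← map_add]
        congr 1
        have hpow : (X - C a) ^ d = (X - C a) ^ (d - 1) * (X - C a) := by
          rw [← pow_succ, Nat.sub_add_cancel (show 1 ≤ d by omega)]
        rw [hh, hpow]
        linear_combination (-(X - C a)) * hrs
      have h3 : φ r * y ^ d + φ s * φ (X - C a) ^ d ∈ Ideal.span {φ (X - C a), y} ^ d := add_mem (Ideal.mul_mem_left _ _ m2) (Ideal.mul_mem_left _ _ m1)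
      rwa [← this] at h3
    · rw [Ideal.prod_eq_iInf_of_pairwise_isCoprime]
      · simp only [Ideal.mem_iInf]
        exact fun z hz => Ideal.subset_span (by simp)
      · intro z hz w hw hzw
        obtain ⟨k, hk, rfl⟩ := hroots z hz
        obtain ⟨l, hl, rfl⟩ := hroots w hw
        have hkl : k - l ≠ 0 := fun h => hzw (by rw [sub_eq_zero.mp h])
        rw [Function.onFun, Ideal.isCoprime_iff_exists]
        have m1 : φ (C k) * y - φ (C c) ∈ Ideal.span {φ (X - C a), φ (C k) * y - φ (C c)} :=
          Ideal.subset_span (by simp)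
        have m2 : φ (C l) * y - φ (C c) ∈ Ideal.span {φ (X - C a), φ (C l) * y - φ (C c)} :=
          Ideal.subset_span (by simp)
        refine ⟨_, Ideal.mul_mem_left _ (φ (C (l * ((k - l) * c)⁻¹))) m1, _,
          Ideal.mul_mem_left _ (φ (C (-k * ((k - l) * c)⁻¹))) m2, ?_⟩
        have e1 : φ (C ((k - l) * c * ((k - l) * c)⁻¹)) = 1 := by
          rw [mul_inv_cancel₀ (mul_ne_zero hkl hc)]; simp
        rw [← e1]
        simp only [map_mul, map_neg, map_sub]
        ring

end curve

theorem stmt_7 {K : Type*} [Field K] [IsAlgClosed K] (d n : ℕ)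
    (hd : 2 ≤ d) (hdn : d < n) (hgcd : Nat.gcd n d = 1)
    (hchar : ¬ (ringChar K ∣ d))
    (f : K[X]) (hmonic : f.Monic) (hdeg : f.natDegree = n) (hsqf : Squarefree f)
    (hDed : IsDedekindDomain (CurveRing K d f))
    (a c : K) (hP : c ^ d = f.eval a)
    (m : ℕ) (hm1 : 1 < m) (hmn : m ≤ n) (hdm : ¬ d ∣ m)
    (horder : IsTorsionOfOrder d f a c m) :
    m = n ∧
    ∃ v : K[X], d * v.natDegree ≤ n - 1 ∧
      ptIdeal d f a c ^ n =
        Ideal.span {AdjoinRoot.root ((X : K[X][X]) ^ d - C f) - AdjoinRoot.of _ v} := by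
  have hdom : IsDomain (CurveRing K d f) := hDed.toIsDomain
  have hd0 : 0 < d := by omega
  have hdK : (d : K) ≠ 0 := fun h => hchar ((ringChar.spec K d).mp h)
  have : NeZero (d : K) := ⟨hdK⟩
  obtain ⟨ζ, hζ⟩ := HasEnoughRootsOfUnity.exists_primitiveRoot K d
  set φ := AdjoinRoot.of ((X : K[X][X]) ^ d - C f) with hφ
  set y := AdjoinRoot.root ((X : K[X][X]) ^ d - C f) with hy
  have hyd : y ^ d = φ f := aux_root
  have hinj : Function.Injective φ := aux_inj hd
  obtain ⟨Γ, _, v, hK, hX1⟩ := aux_val φ hinj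
  have hYv : v y ^ d = v (φ X) ^ n := by
    rw [← map_pow, hyd, aux_poly φ v hK hX1 f hmonic.ne_zero, hdeg]
  obtain ⟨τ, hτ, hX, hY⟩ := aux_tau _ _ hX1 n d (by omega) hgcd hYv
  have hpinj : Function.Injective (fun k : ℕ => τ ^ k) := (pow_right_strictMono₀ hτ).injective
  -- reduced representatives
  have hrep : ∀ g : CurveRing K d f, g ≠ 0 → ∃ p : K[X][X], p ≠ 0 ∧ p.natDegree < d ∧
      AdjoinRoot.mk _ p = g := by
    intro g hg
    have hmk := AdjoinRoot.mk_leftInverse (aux_monic (f := f) hd) g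
    refine ⟨AdjoinRoot.modByMonicHom (aux_monic hd) g, ?_, ?_, hmk⟩
    · intro h
      rw [h, map_zero] at hmk
      exact hg hmk.symm
    · obtain ⟨q, rfl⟩ := AdjoinRoot.mk_surjective g
      rw [AdjoinRoot.modByMonicHom_mk]
      have h1 : ((X : K[X][X]) ^ d - C f).natDegree = d := natDegree_X_pow_sub_C
      conv_rhs => rw [← h1]
      apply natDegree_modByMonic_lt _ (aux_monic hd)
      intro h
      rw [h, natDegree_one] at h1
      omega
  -- units
  have hge : ∀ g : CurveRing K d f, g ≠ 0 → 1 ≤ v g := by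
    intro g hg
    obtain ⟨p, hp, hpd, rfl⟩ := hrep g hg
    obtain ⟨i, -, h1, -⟩ := aux_g hd hgcd v hK τ hτ hX hY p hp hpd
    rw [h1]
    exact one_le_pow₀ hτ.le
  have hunit : ∀ u : (CurveRing K d f)ˣ, v u = 1 := by
    intro u
    have h1 := hge u u.ne_zero
    have h2 := hge ↑u⁻¹ u⁻¹.ne_zero
    have h3 : v u * v ↑u⁻¹ = 1 := by rw [← map_mul]; simp
    refine le_antisymm ?_ h1
    rw [← h3]
    exact le_mul_of_one_le_right' h2
  obtain ⟨⟨hm0, hprin⟩, -⟩ := horder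
  obtain ⟨g, hg⟩ := hprin.principal
  have hg : ptIdeal d f a c ^ m = Ideal.span {g} := hg
  have hxa : φ (X - C a) ≠ 0 := fun h => X_sub_C_ne_zero a (hinj (h.trans (map_zero φ).symm))
  have hg0 : g ≠ 0 := by
    rintro rfl
    have : φ (X - C a) ^ m ∈ ptIdeal d f a c ^ m :=
      Ideal.pow_mem_pow (Ideal.subset_span (by simp [hφ])) _
    rw [hg, Ideal.mem_span_singleton, zero_dvd_iff] at this
    exact hxa (pow_eq_zero_iff (by omega) |>.mp this)
  obtain ⟨p, hp, hpd, hpg⟩ := hrep g hg0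
  obtain ⟨i, hi, h1, h2⟩ := aux_g hd hgcd v hK τ hτ hX hY p hp hpd
  rw [hpg] at h1
  -- conjugates
  have hσ : ∀ z : CurveRing K d f, ∃ σ : CurveRing K d f →+* CurveRing K d f, z ^ d = 1 →
      (∀ p, σ (φ p) = φ p) ∧ σ y = z * y := by
    intro z
    by_cases hz : z ^ d = 1
    · obtain ⟨σ, h⟩ := aux_sigma z hz
      exact ⟨σ, fun _ => h⟩
    · exact ⟨RingHom.id _, fun h => absurd h hz⟩
  choose σ hσ using hσ
  have hvσ : ∀ z : CurveRing K d f, z ^ d = 1 → v (σ z g) = v g := by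
    intro z hz
    have hvz : v z = 1 := by
      have : v z ^ d = 1 := by rw [← map_pow, hz, map_one]
      exact (pow_eq_one_iff_of_nonneg zero_le (by omega)).mp this
    obtain ⟨j, hj, h3, h4⟩ := aux_g hd hgcd (v.comap (σ z))
      (fun k hk => by rw [Valuation.comap_apply, (hσ z hz).1, hK k hk]) τ hτ
      (by rw [Valuation.comap_apply, (hσ z hz).1, hX])
      (by rw [Valuation.comap_apply, (hσ z hz).2, map_mul, hvz, one_mul, hY]) p hp hpd
    rw [hpg, Valuation.comap_apply] at h3
    rw [h3, h1, le_antisymm (h2 j hj) (h4 i hi)]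
  have hZ : IsPrimitiveRoot (φ (C ζ)) d :=
    hζ.map_of_injective (f := φ.comp C) (hinj.comp C_injective)
  have hspan : Ideal.span {∏ z ∈ nthRootsFinset d (1 : CurveRing K d f), σ z g} =
      Ideal.span {φ (X - C a) ^ m} := by
    rw [← Ideal.span_singleton_pow, ← aux_ideal hd hsqf a c hP ζ hζ, ← Ideal.prod_span_singleton,
      ← Finset.prod_pow]
    refine Finset.prod_congr rfl fun z hz => ?_
    rw [mem_nthRootsFinset hd0] at hz
    have := congrArg (Ideal.map (σ z)) hg
    rw [Ideal.map_pow, Ideal.map_span, Set.image_singleton, ptIdeal, Ideal.map_span,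
      Set.image_pair, map_sub (σ z), (hσ z hz).1, (hσ z hz).1, (hσ z hz).2] at this
    exact this.symm
  rw [Ideal.span_singleton_eq_span_singleton] at hspan
  obtain ⟨u, hu⟩ := hspan
  have hv := congrArg v hu
  rw [map_mul, hunit, mul_one, map_prod, map_pow,
    aux_poly φ v hK hX1 _ (X_sub_C_ne_zero a), natDegree_X_sub_C, pow_one, hX,
    Finset.prod_congr rfl (fun z hz => hvσ z ((mem_nthRootsFinset hd0 _).mp hz)),
    Finset.prod_const, hZ.card_nthRootsFinset, h1, ← pow_mul, ← pow_mul, mul_comm] at hv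
  have hm : d * (p.coeff i).natDegree + n * i = m :=
    Nat.eq_of_mul_eq_mul_left hd0 (hpinj hv)
  rw [hm] at h2
  have hi1 : i = 1 := by
    have : i < 2 := by
      by_contra hlt
      have : n * 2 ≤ n * i := Nat.mul_le_mul_left _ (by omega)
      omega
    interval_cases i
    · exact absurd ⟨_, by simpa using hm.symm⟩ hdm
    · rfl
  subst hi1
  have hmn' : m = n := by omega
  have hdeg1 : (p.coeff 1).natDegree = 0 := by
    have : d * (p.coeff 1).natDegree = 0 := by omega
    rcases Nat.mul_eq_zero.mp this with h | h
    · omega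
    · exact h
  obtain ⟨e, he⟩ := natDegree_eq_zero.mp hdeg1
  have he0 : e ≠ 0 := by
    rintro rfl
    exact hi (by rw [← he, C_0])
  have hpeq : p = C (p.coeff 0) + C (C e) * X := by
    ext1 j
    rcases j with _ | _ | j
    · simp
    · simp [he]
    · have : p.coeff (j + 2) = 0 := by
        by_contra h
        have := h2 _ h
        have : n * 2 ≤ n * (j + 2) := Nat.mul_le_mul_left _ (by omega)
        omega
      simp [this, coeff_C, coeff_X]
  have hgeq : g = φ (p.coeff 0) + φ (C e) * y := by
    rw [← hpg, hpeq]
    simp [hφ, hy]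
  refine ⟨hmn', -(C e⁻¹ * p.coeff 0), ?_, ?_⟩
  · rw [natDegree_neg, natDegree_C_mul (inv_ne_zero he0)]
    by_cases h0 : p.coeff 0 = 0
    · simp [h0]
    · have h3 := h2 0 h0
      have h4 : d * (p.coeff 0).natDegree ≠ n := by
        intro h
        exact hdm ⟨_, hmn'.trans h.symm⟩
      omega
  · rw [← hmn', hg, Ideal.span_singleton_eq_span_singleton]
    have hee : φ (C e) * φ (C e⁻¹) = 1 := by
      rw [← map_mul, ← C_mul, mul_inv_cancel₀ he0]; simp
    refine ⟨⟨φ (C e⁻¹), φ (C e), by rw [mul_comm, hee], hee⟩, ?_⟩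
    change g * φ (C e⁻¹) = _
    rw [hgeq, map_neg, map_mul]
    linear_combination y * hee
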